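/- arXiv:1803.02992 — 7 statements merged into one kernel-verified Lean document; each statement's English description precedes it below -/
import Mathlib

section
/- Let u : ℝ → ℝ² be continuous and let b : [0, ∞) → ℝ² be differentiable with ḃ(t) = (I₂ − b(t) b(t)ᵀ) u(t) for all t ≥ 0 and ‖b(0)‖ = 1. Then ‖b(t)‖ = 1 for all t ≥ 0, i.e., the unit circle is invariant under the projected dynamics ḃ = P_b u. -/
open scoped RealInnerProductSpace
open Real Filter

/-- The orthogonal projection `P_b v = (I₂ - b bᵀ) v = v - ⟨b, v⟩ b`. -/
noncomputable def proj (b v : EuclideanSpace ℝ (Fin 2)) : EuclideanSpace ℝ (Fin 2) :=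
  v - ⟪b, v⟫ • b

theorem inner_proj_self (b v : EuclideanSpace ℝ (Fin 2)) :
    ⟪b, proj b v⟫ = ⟪b, v⟫ * (1 - ‖b‖ ^ 2) := by
  rw [proj, inner_sub_right, real_inner_smul_right, real_inner_self_eq_norm_sq]
  ring

/-- The unit circle is invariant under the projected dynamics ḃ = P_b u. -/
theorem stmt4 (u : ℝ → EuclideanSpace ℝ (Fin 2)) (hu : Continuous u)
    (b : ℝ → EuclideanSpace ℝ (Fin 2))
    (hb : ∀ t ≥ (0 : ℝ), HasDerivAt b (proj (b t) (u t)) t)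
    (h0 : ‖b 0‖ = 1) :
    ∀ t ≥ (0 : ℝ), ‖b t‖ = 1 := by
  intro T hT
  have hbc : ContinuousOn b (Set.Icc 0 T) := fun t ht =>
    (hb t ht.1).continuousAt.continuousWithinAt
  obtain ⟨C, hC⟩ := isCompact_Icc.exists_bound_of_continuousOn (hbc.inner (𝕜 := ℝ) hu.continuousOn)
  have hderiv : ∀ t ∈ Set.Ico 0 T, HasDerivWithinAt (fun s => 1 - ‖b s‖ ^ 2)
      (-(2 * (⟪b t, u t⟫ * (1 - ‖b t‖ ^ 2)))) (Set.Ici t) t := fun t ht => by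
    have h := ((hb t ht.1).norm_sq.const_sub 1).hasDerivWithinAt (s := Set.Ici t)
    rwa [inner_proj_self] at h
  have hzero : 1 - ‖b T‖ ^ 2 = 0 := by
    refine eq_zero_of_abs_deriv_le_mul_abs_self_of_eq_zero_right (K := 2 * C)
      (continuousOn_const.sub (hbc.norm.pow 2)) hderiv (by simp [h0]) (fun t ht => ?_)
      T ⟨hT, le_rfl⟩
    rw [norm_neg, norm_mul, norm_mul, Real.norm_ofNat, ← mul_assoc]
    exact mul_le_mul_of_nonneg_right
      (mul_le_mul_of_nonneg_left (hC t ⟨ht.1, ht.2.le⟩) zero_le_two) (norm_nonneg _)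
  exact (pow_eq_one_iff_of_nonneg (norm_nonneg _) two_ne_zero).1 (by linarith)
end

section
/- Let b* ∈ ℝ² be a unit vector and let b : [0, ∞) → ℝ² be differentiable with ḃ(t) = (I₂ − b(t) b(t)ᵀ) b* for all t ≥ 0, where b(0) is a unit vector with b(0) ≠ −b*. Then, with c := ¼‖b(0) + b*‖² > 0 (which equals cos²(α₀/2) for α₀ the angle between b(0) and b*), the bound ‖b(t) − b*‖² ≤ ‖b(0) − b*‖² e^{−2 c t} holds for all t ≥ 0; in particular b(t) → b* as t → ∞. Thus the equilibrium b = b* of ḃ = P_b b* is almost globally exponentially stable on the unit circle. -/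
open scoped RealInnerProductSpace
open Real Filter

/-- A solution of the scalar linear equation `ẇ = a w` that vanishes at `0` vanishes on `[0, ∞)`. -/
lemma eq_zero_of_hasDerivAt_mul {a w : ℝ → ℝ} (ha : ContinuousOn a (Set.Ici 0))
    (hw : ∀ t ≥ (0 : ℝ), HasDerivAt w (a t * w t) t) (hw0 : w 0 = 0) {t : ℝ} (ht : 0 ≤ t) :
    w t = 0 := by
  obtain ⟨K, hK⟩ := isCompact_Icc.exists_bound_of_continuousOn
    (ha.mono (Set.Icc_subset_Ici_self : Set.Icc 0 t ⊆ Set.Ici 0))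
  have h := norm_le_gronwallBound_of_norm_deriv_right_le (f := w) (f' := fun s => a s * w s)
    (δ := 0) (K := K) (ε := 0) (a := 0) (b := t)
    (fun s hs => (hw s hs.1).continuousAt.continuousWithinAt)
    (fun s hs => (hw s hs.1).hasDerivWithinAt) (by simp [hw0])
    (fun s hs => by
      rw [norm_mul, add_zero]
      exact mul_le_mul_of_nonneg_right (hK s ⟨hs.1, hs.2.le⟩) (norm_nonneg _))
    t ⟨ht, le_rfl⟩
  simpa [gronwallBound_ε0_δ0] using h

section ProjectionFlow

variable {bs : EuclideanSpace ℝ (Fin 2)} {b : ℝ → EuclideanSpace ℝ (Fin 2)}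

/-- Along `ḃ = P_b b*`, the cosine `u = ⟪b, b*⟫` satisfies `u̇ = 1 - u²`. -/
lemma hasDerivAt_inner_of_proj (hbs : ‖bs‖ = 1) {t : ℝ} (hb : HasDerivAt b (proj (b t) bs) t) :
    HasDerivAt (fun s => ⟪b s, bs⟫) (1 - ⟪b t, bs⟫ ^ 2) t := by
  refine (hb.inner ℝ (hasDerivAt_const t bs)).congr_deriv ?_
  simp only [proj, inner_zero_right, inner_sub_left, real_inner_smul_left,
    real_inner_self_eq_norm_sq, hbs]
  ring

/-- The flow `ḃ = P_b b*` preserves the unit circle. -/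
lemma norm_eq_one_of_proj (hb : ∀ t ≥ (0 : ℝ), HasDerivAt b (proj (b t) bs) t)
    (h0 : ‖b 0‖ = 1) {t : ℝ} (ht : 0 ≤ t) : ‖b t‖ = 1 := by
  have hu : ContinuousOn (fun s => -2 * ⟪b s, bs⟫) (Set.Ici 0) := fun s hs =>
    (((hb s hs).continuousAt.inner continuousAt_const).const_mul (-2)).continuousWithinAt
  have h : 1 - ‖b t‖ ^ 2 = 0 := by
    refine eq_zero_of_hasDerivAt_mul (w := fun s => 1 - ‖b s‖ ^ 2) hu (fun s hs => ?_)
      (by simp [h0]) ht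
    refine ((hb s hs).norm_sq.const_sub 1).congr_deriv ?_
    simp only [proj, inner_sub_right, real_inner_smul_right, real_inner_self_eq_norm_sq]
    ring
  exact (sq_eq_sq₀ (norm_nonneg _) zero_le_one).mp (by linarith)

/-- Along `ḃ = P_b b*` on the unit circle, `⟪b, b*⟫` never drops below its initial value. -/
lemma inner_zero_le_inner_of_proj (hbs : ‖bs‖ = 1)
    (hb : ∀ t ≥ (0 : ℝ), HasDerivAt b (proj (b t) bs) t) (h0 : ‖b 0‖ = 1) {t : ℝ} (ht : 0 ≤ t) :
    ⟪b 0, bs⟫ ≤ ⟪b t, bs⟫ := by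
  have hmono : MonotoneOn (fun s => ⟪b s, bs⟫) (Set.Ici 0) := by
    refine monotoneOn_of_hasDerivWithinAt_nonneg (convex_Ici 0)
      (fun s hs => (hasDerivAt_inner_of_proj hbs (hb s hs)).continuousAt.continuousWithinAt)
      (fun s hs => (hasDerivAt_inner_of_proj hbs
        (hb s (interior_subset hs))).hasDerivWithinAt) (fun s hs => ?_)
    have h := abs_real_inner_le_norm (b s) bs
    rw [norm_eq_one_of_proj hb h0 (interior_subset hs), hbs, one_mul] at h
    exact sub_nonneg.mpr ((sq_le_one_iff_abs_le_one _).mpr h)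
  exact hmono Set.self_mem_Ici ht ht

/-- Exponential decay of the squared distance to `b*` along `ḃ = P_b b*` on the unit circle. -/
lemma norm_sub_sq_le_of_proj (hbs : ‖bs‖ = 1)
    (hb : ∀ t ≥ (0 : ℝ), HasDerivAt b (proj (b t) bs) t) (h0 : ‖b 0‖ = 1) {t : ℝ} (ht : 0 ≤ t) :
    ‖b t - bs‖ ^ 2 ≤
      ‖b 0 - bs‖ ^ 2 * Real.exp (-2 * ((1 / 4) * ‖b 0 + bs‖ ^ 2) * t) := by
  have hdist : ∀ s ≥ (0 : ℝ), ‖b s - bs‖ ^ 2 = 2 * (1 - ⟪b s, bs⟫) := fun s hs => by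
    rw [norm_sub_sq_real, norm_eq_one_of_proj hb h0 hs, hbs]; ring
  have hrate : -2 * ((1 / 4) * ‖b 0 + bs‖ ^ 2) * t = -((1 + ⟪b 0, bs⟫) * t) := by
    rw [norm_add_sq_real, h0, hbs]; ring
  set k := 1 + ⟪b 0, bs⟫ with hk
  have hderiv : ∀ s ≥ (0 : ℝ), HasDerivAt (fun s => (1 - ⟪b s, bs⟫) * Real.exp (k * s))
      (-((1 - ⟪b s, bs⟫) * (⟪b s, bs⟫ - ⟪b 0, bs⟫) * Real.exp (k * s))) s := fun s hs => by
    refine (((hasDerivAt_inner_of_proj hbs (hb s hs)).const_sub 1).mul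
      ((hasDerivAt_id s).const_mul k).exp).congr_deriv ?_
    simp only [id, hk]
    ring
  have hanti : AntitoneOn (fun s => (1 - ⟪b s, bs⟫) * Real.exp (k * s)) (Set.Ici 0) := by
    refine antitoneOn_of_hasDerivWithinAt_nonpos (convex_Ici 0)
      (fun s hs => (hderiv s hs).continuousAt.continuousWithinAt)
      (fun s hs => (hderiv s (interior_subset hs)).hasDerivWithinAt) (fun s hs => ?_)
    have hs0 : (0 : ℝ) ≤ s := interior_subset hs
    have h1 : 0 ≤ 1 - ⟪b s, bs⟫ := by
      have := hdist s hs0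
      nlinarith [sq_nonneg ‖b s - bs‖]
    have h2 := sub_nonneg.mpr (inner_zero_le_inner_of_proj hbs hb h0 hs0)
    exact neg_nonpos.mpr (by positivity)
  have h : (1 - ⟪b t, bs⟫) * Real.exp (k * t) ≤ 1 - ⟪b 0, bs⟫ := by
    simpa using hanti Set.self_mem_Ici ht ht
  rw [hdist t ht, hdist 0 le_rfl, hrate, Real.exp_neg, ← div_eq_mul_inv,
    le_div_iff₀ (Real.exp_pos _)]
  linarith

end ProjectionFlow

/-- Almost-global exponential stability of b = b* for ḃ = P_b b*: if b(0) is a unit vector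
with b(0) ≠ -b*, then with c = ¼‖b(0) + b*‖² > 0 we have
‖b(t) - b*‖² ≤ ‖b(0) - b*‖² e^{-2ct} for all t ≥ 0, and b(t) → b*. -/
theorem stmt5 (bs : EuclideanSpace ℝ (Fin 2)) (hbs : ‖bs‖ = 1)
    (b : ℝ → EuclideanSpace ℝ (Fin 2))
    (hb : ∀ t ≥ (0 : ℝ), HasDerivAt b (proj (b t) bs) t)
    (h0 : ‖b 0‖ = 1) (hne : b 0 ≠ -bs) :
    (0 : ℝ) < (1 / 4) * ‖b 0 + bs‖ ^ 2
    ∧ (∀ t ≥ (0 : ℝ),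
        ‖b t - bs‖ ^ 2 ≤ ‖b 0 - bs‖ ^ 2 * Real.exp (-2 * ((1 / 4) * ‖b 0 + bs‖ ^ 2) * t))
    ∧ Filter.Tendsto b Filter.atTop (nhds bs) := by
  have hc : (0 : ℝ) < (1 / 4) * ‖b 0 + bs‖ ^ 2 := by
    have : 0 < ‖b 0 + bs‖ := norm_pos_iff.mpr fun h => hne (eq_neg_of_add_eq_zero_left h)
    positivity
  have hdecay := fun t (ht : t ≥ (0 : ℝ)) => norm_sub_sq_le_of_proj hbs hb h0 ht
  refine ⟨hc, hdecay, ?_⟩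
  have hexp : Tendsto (fun t : ℝ => ‖b 0 - bs‖ ^ 2 *
      Real.exp (-2 * ((1 / 4) * ‖b 0 + bs‖ ^ 2) * t)) atTop (nhds 0) := by
    have hneg : -2 * ((1 / 4) * ‖b 0 + bs‖ ^ 2) < 0 := by linarith
    simpa only [mul_zero, Function.comp_def, id] using (Real.tendsto_exp_atBot.comp
      (tendsto_id.const_mul_atTop_of_neg hneg)).const_mul (‖b 0 - bs‖ ^ 2)
  have hsq : Tendsto (fun t => ‖b t - bs‖ ^ 2) atTop (nhds 0) :=
    squeeze_zero' (Eventually.of_forall fun t => sq_nonneg _)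
      ((eventually_ge_atTop 0).mono hdecay) hexp
  rw [tendsto_iff_norm_sub_tendsto_zero]
  simpa using hsq.sqrt
end

section
/- Let b* ∈ ℝ² be a unit vector and let b : [0, ∞) → ℝ² be differentiable with ḃ(t) = (I₂ − b(t) b(t)ᵀ) b* for all t ≥ 0 and ‖b(0)‖ = 1. Then the function t ↦ ⟨b(t), b*⟩ is nondecreasing on [0, ∞); equivalently, the angle between b(t) and b* is nonincreasing in t. -/
open scoped RealInnerProductSpace
open Real Filter

/-- A solution of a scalar linear equation `df/dt = k f` on `[0, ∞)` with nonnegative initial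
value stays nonnegative. -/
theorem nonneg_of_hasDerivAt_eq_mul {f k : ℝ → ℝ} (hk : ContinuousOn k (Set.Ici 0))
    (hf : ∀ t ≥ (0 : ℝ), HasDerivAt f (k t * f t) t) (h0 : 0 ≤ f 0) {t : ℝ} (ht : 0 ≤ t) :
    0 ≤ f t := by
  have hcont : Continuous fun s => k (max s 0) :=
    hk.comp_continuous (by fun_prop) fun s => le_max_right s 0
  set K : ℝ → ℝ := fun s => ∫ x in (0 : ℝ)..s, k (max x 0)
  have hg : ∀ s ≥ (0 : ℝ), HasDerivAt (fun s => f s * exp (-K s)) 0 s := fun s hs => by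
    have hK : HasDerivAt K (k s) s := by
      simpa [max_eq_left hs] using hcont.integral_hasStrictDerivAt 0 s |>.hasDerivAt
    exact ((hf s hs).mul hK.neg.exp).congr_deriv (by ring)
  have hconst : f t * exp (-K t) = f 0 * exp (-K 0) :=
    constant_of_has_deriv_right_zero
      (fun s hs => (hg s hs.1).continuousAt.continuousWithinAt)
      (fun s hs => (hg s hs.1).hasDerivWithinAt) t ⟨ht, le_rfl⟩
  refine nonneg_of_mul_nonneg_left ?_ (exp_pos (-K t))
  rw [hconst]
  positivity

/-- Along ḃ = P_b b* starting on the unit circle, t ↦ ⟨b(t), b*⟩ is nondecreasing on [0, ∞). -/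
theorem stmt6 (bs : EuclideanSpace ℝ (Fin 2)) (hbs : ‖bs‖ = 1)
    (b : ℝ → EuclideanSpace ℝ (Fin 2))
    (hb : ∀ t ≥ (0 : ℝ), HasDerivAt b (proj (b t) bs) t)
    (h0 : ‖b 0‖ = 1) :
    MonotoneOn (fun t => ⟪b t, bs⟫) (Set.Ici (0 : ℝ)) := by
  have hc : ∀ t ≥ (0 : ℝ), HasDerivAt (fun t => ⟪b t, bs⟫) (1 - ⟪b t, bs⟫ ^ 2) t := by
    intro t ht
    refine ((hb t ht).inner ℝ (hasDerivAt_const t bs)).congr_deriv ?_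
    simp [proj, inner_sub_left, real_inner_smul_left, hbs]
    ring
  have hcont : ContinuousOn (fun t => ⟪b t, bs⟫) (Set.Ici (0 : ℝ)) :=
    fun t ht => (hc t ht).continuousAt.continuousWithinAt
  have hnonneg : ∀ t ≥ (0 : ℝ), 0 ≤ 1 - ⟪b t, bs⟫ ^ 2 := by
    intro t ht
    refine nonneg_of_hasDerivAt_eq_mul (f := fun t => 1 - ⟪b t, bs⟫ ^ 2)
      (k := fun t => -2 * ⟪b t, bs⟫) (continuousOn_const.mul hcont) (fun s hs => ?_) ?_ ht
    · exact (((hc s hs).pow 2).const_sub 1).congr_deriv (by push_cast; ring)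
    · have h : |⟪b 0, bs⟫| ≤ 1 := by simpa [h0, hbs] using abs_real_inner_le_norm (b 0) bs
      exact sub_nonneg.2 ((sq_le_one_iff_abs_le_one _).2 h)
  exact monotoneOn_of_hasDerivWithinAt_nonneg (convex_Ici 0) hcont
    (fun t ht => (hc t (interior_subset ht)).hasDerivWithinAt)
    fun t ht => hnonneg t (interior_subset ht)
end

section
/- Let b* ∈ ℝ² be a unit vector. The equilibrium −b* of the dynamics ḃ = (I₂ − b bᵀ) b* on the unit circle is unstable: for every δ > 0 there exists a unit vector b₀ with 0 < ‖b₀ + b*‖ < δ such that every differentiable solution b : [0, ∞) → ℝ² of ḃ(t) = (I₂ − b(t) b(t)ᵀ) b* with b(0) = b₀ satisfies ‖b(t) + b*‖ > 1 for all sufficiently large t. -/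
open scoped RealInnerProductSpace
open Real Filter

/-- A solution of the linear equation `F' = a F` with continuous coefficient `a` that vanishes at
`0` vanishes on `[0, ∞)`. -/
lemma eq_zero_of_hasDerivAt_mul_self {F a : ℝ → ℝ} (ha : ContinuousOn a (Set.Ici 0))
    (hF : ∀ t ≥ (0 : ℝ), HasDerivAt F (a t * F t) t) (h0 : F 0 = 0) {t : ℝ} (ht : 0 ≤ t) :
    F t = 0 := by
  obtain ⟨K, hK⟩ := (isCompact_Icc (a := (0 : ℝ)) (b := t)).exists_bound_of_continuousOn
    (ha.mono Set.Icc_subset_Ici_self)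
  refine eq_zero_of_abs_deriv_le_mul_abs_self_of_eq_zero_right (f' := fun s => a s * F s) (K := K)
    (fun s hs => (hF s hs.1).continuousAt.continuousWithinAt)
    (fun s hs => (hF s hs.1).hasDerivWithinAt) h0 (fun s hs => ?_) t ⟨ht, le_rfl⟩
  rw [norm_mul]
  exact mul_le_mul_of_nonneg_right (hK s ⟨hs.1, hs.2.le⟩) (norm_nonneg _)

/-- A solution of `x' = 1 - x²` with `-1 < x 0 < 1` is eventually positive. -/
lemma eventually_pos_of_hasDerivAt_one_sub_sq {x : ℝ → ℝ}
    (hx : ∀ t ≥ (0 : ℝ), HasDerivAt x (1 - x t ^ 2) t) (hlo : -1 < x 0) (hhi : x 0 < 1) :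
    ∀ᶠ t in atTop, 0 < x t := by
  have hp : 0 < 1 + x 0 := by linarith
  have hm : 0 < 1 - x 0 := by linarith
  have invariant {t : ℝ} (ht : 0 ≤ t) :
      (1 - x 0) * (1 + x t) * exp (-t) - (1 + x 0) * (1 - x t) * exp t = 0 := by
    refine eq_zero_of_hasDerivAt_mul_self (a := fun s => -x s)
      (F := fun s => (1 - x 0) * (1 + x s) * exp (-s) - (1 + x 0) * (1 - x s) * exp s)
      (fun s hs => (hx s hs).continuousAt.neg.continuousWithinAt) (fun s hs => ?_)
      (by simp; ring) ht
    refine (((((hx s hs).const_add 1).const_mul (1 - x 0)).mul (hasDerivAt_neg s).exp).sub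
      ((((hx s hs).const_sub 1).const_mul (1 + x 0)).mul (hasDerivAt_exp s))).congr_deriv ?_
    ring
  filter_upwards [eventually_ge_atTop 0,
    tendsto_exp_atTop.eventually_gt_atTop ((1 - x 0) / (1 + x 0))] with t ht hexp
  rw [div_lt_iff₀ hp] at hexp
  have hneg : exp (-t) ≤ 1 := exp_le_one_iff.2 (by linarith)
  by_contra! h
  have h1 : (1 - x 0) * (1 + x t) * exp (-t) ≤ 1 - x 0 := by
    calc (1 - x 0) * (1 + x t) * exp (-t) ≤ (1 - x 0) * 1 * exp (-t) := by gcongr; linarith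
      _ ≤ (1 - x 0) * 1 * 1 := by gcongr
      _ = 1 - x 0 := by ring
  have h2 : exp t * (1 + x 0) ≤ (1 + x 0) * (1 - x t) * exp t := by
    nlinarith [mul_pos hp (exp_pos t)]
  linarith [invariant ht]

/-- Every unit vector of the Euclidean plane has an orthogonal unit vector. -/
lemma exists_unit_orthogonal (v : EuclideanSpace ℝ (Fin 2)) (hv : ‖v‖ = 1) :
    ∃ e : EuclideanSpace ℝ (Fin 2), ‖e‖ = 1 ∧ ⟪v, e⟫ = 0 := by
  refine ⟨!₂[-v 1, v 0], ?_, ?_⟩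
  · rw [← hv, EuclideanSpace.norm_eq, EuclideanSpace.norm_eq]
    simp [Fin.sum_univ_two, add_comm]
  · simp [PiLp.inner_apply, Fin.sum_univ_two]
    ring

/-- The equilibrium -b* of ḃ = P_b b* on the unit circle is unstable: arbitrarily close to
-b* there are unit initial conditions whose solutions eventually leave the unit ball
around -b*. -/
theorem stmt7 (bs : EuclideanSpace ℝ (Fin 2)) (hbs : ‖bs‖ = 1) :
    ∀ δ > (0 : ℝ), ∃ b₀ : EuclideanSpace ℝ (Fin 2), ‖b₀‖ = 1
      ∧ 0 < ‖b₀ + bs‖ ∧ ‖b₀ + bs‖ < δ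
      ∧ ∀ b : ℝ → EuclideanSpace ℝ (Fin 2),
          (∀ t ≥ (0 : ℝ), HasDerivAt b (proj (b t) bs) t) → b 0 = b₀ →
          ∃ T : ℝ, ∀ t ≥ T, ‖b t + bs‖ > 1 := by
  intro δ hδ
  obtain ⟨e, he, horth⟩ := exists_unit_orthogonal bs hbs
  obtain ⟨θ, hθ0, hθ⟩ := exists_between (lt_min hδ one_pos)
  obtain ⟨hθδ, hθ1⟩ := lt_min_iff.1 hθ
  have hcos_pos : 0 < cos θ := cos_pos_of_le_one (by rw [abs_of_pos hθ0]; exact hθ1.le)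
  have hcos_lt : cos θ < 1 := by
    simpa using cos_lt_cos_of_nonneg_of_le_pi le_rfl (by linarith [pi_gt_three]) hθ0
  have hcos_ge := one_sub_sq_div_two_le_cos (x := θ)
  have norm_sq_comb (p q : ℝ) : ‖p • bs + q • e‖ ^ 2 = p ^ 2 + q ^ 2 := by
    rw [norm_add_sq_real, norm_smul, norm_smul, inner_smul_left, inner_smul_right, horth, hbs, he]
    simp
  have hdist : ‖((-cos θ) • bs + sin θ • e) + bs‖ ^ 2 = 2 - 2 * cos θ := by
    have : ((-cos θ) • bs + sin θ • e) + bs = (1 - cos θ) • bs + sin θ • e := by module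
    rw [this, norm_sq_comb]
    linarith [sin_sq_add_cos_sq θ]
  refine ⟨(-cos θ) • bs + sin θ • e, ?_, ?_, ?_, fun b hb hb0 => ?_⟩
  · rw [← sq_eq_sq₀ (norm_nonneg _) zero_le_one, norm_sq_comb]
    linarith [sin_sq_add_cos_sq θ]
  · refine (norm_nonneg _).lt_of_ne fun h => ?_
    rw [← h] at hdist
    linarith
  · exact (abs_le_of_sq_le_sq' (by linarith) hθ0.le).2.trans_lt hθδ
  · have hx : ∀ t ≥ (0 : ℝ),
        HasDerivAt (fun s => ⟪bs, b s⟫) (1 - ⟪bs, b t⟫ ^ 2) t := fun t ht => by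
      refine ((hasDerivAt_const t bs).inner ℝ (hb t ht)).congr_deriv ?_
      simp only [proj, inner_sub_right, inner_smul_right, real_inner_self_eq_norm_sq, hbs,
        real_inner_comm bs (b t), inner_zero_left]
      ring
    have hx0 : ⟪bs, b 0⟫ = -cos θ := by
      simp [hb0, inner_add_right, inner_smul_right, horth, hbs]
    obtain ⟨T, hT⟩ := eventually_atTop.1 <|
      eventually_pos_of_hasDerivAt_one_sub_sq hx (by linarith) (by linarith)
    refine ⟨T, fun t ht => ?_⟩
    have hle := real_inner_le_norm bs (b t + bs)
    rw [inner_add_right, real_inner_self_eq_norm_sq, hbs] at hle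
    linarith [hT t ht]
end

section
/- Let N be a nonempty finite index set, let b_i* ∈ ℝ² be a unit vector, and for each j ∈ N let b_j* ∈ ℝ² be a unit vector and α_j ∈ ℝ an angle with b_i* = R(α_j) b_j*. Let b : [0, ∞) → ℝ² be differentiable with ḃ(t) = P_{b(t)} Σ_{j ∈ N} R(α_j) b_j* for all t ≥ 0 (i.e., all neighbors' headings are held constant at their target values b_j*), where b(0) is a unit vector with b(0) ≠ −b_i*. Then ḃ(t) = |N| · P_{b(t)} b_i*, and b(t) → b_i* as t → ∞. -/
open scoped RealInnerProductSpace
open Real Filter MeasureTheory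

/-- The counterclockwise rotation of the plane through angle α. -/
noncomputable def rot (α : ℝ) (v : EuclideanSpace ℝ (Fin 2)) : EuclideanSpace ℝ (Fin 2) :=
  (WithLp.equiv 2 (Fin 2 → ℝ)).symm
    ![Real.cos α * v 0 - Real.sin α * v 1, Real.sin α * v 0 + Real.cos α * v 1]

/-- The unit vector at angle θ: (cos θ, sin θ). -/
noncomputable def dir (θ : ℝ) : EuclideanSpace ℝ (Fin 2) :=
  (WithLp.equiv 2 (Fin 2 → ℝ)).symm ![Real.cos θ, Real.sin θ]

/-- The explicit solution of `ḃ = n (a - ⟨b, a⟩ b)` for a unit vector `a`. -/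
theorem smul_eq_of_hasDerivAt_proj {E : Type*} [NormedAddCommGroup E] [InnerProductSpace ℝ E]
    {n : ℝ} {a : E} (ha : ‖a‖ = 1) {b : ℝ → E}
    (hb : ∀ t ≥ (0 : ℝ), HasDerivAt b (n • (a - ⟪b t, a⟫ • b t)) t) {t : ℝ} (ht : 0 ≤ t) :
    ((1 + ⟪b 0, a⟫) * exp (n * t) + (1 - ⟪b 0, a⟫) * exp (-(n * t))) • b t =
      ((1 + ⟪b 0, a⟫) * exp (n * t) - (1 - ⟪b 0, a⟫) * exp (-(n * t))) • a +
        (2 : ℝ) • (b 0 - ⟪b 0, a⟫ • a) := by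
  set c := ⟪b 0, a⟫ with hc
  have haa : ⟪a, a⟫ = 1 := by rw [real_inner_self_eq_norm_sq, ha, one_pow]
  set y : ℝ → ℝ := fun s ↦ (1 + c) * exp (n * s) + (1 - c) * exp (-(n * s)) with hy
  set z : ℝ → ℝ := fun s ↦ (1 + c) * exp (n * s) - (1 - c) * exp (-(n * s)) with hz
  set q : ℝ → E := fun s ↦ y s • b s - z s • a - (2 : ℝ) • (b 0 - c • a) with hq
  have hpos (s : ℝ) : HasDerivAt (fun s ↦ exp (n * s)) (exp (n * s) * n) s := by
    simpa using ((hasDerivAt_id s).const_mul n).exp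
  have hneg (s : ℝ) : HasDerivAt (fun s ↦ exp (-(n * s))) (exp (-(n * s)) * -n) s := by
    simpa using ((hasDerivAt_id s).const_mul n).neg.exp
  have hy' (s : ℝ) : HasDerivAt y (n * z s) s :=
    (((hpos s).const_mul (1 + c)).add ((hneg s).const_mul (1 - c))).congr_deriv (by
      simp only [hz]; ring)
  have hz' (s : ℝ) : HasDerivAt z (n * y s) s :=
    (((hpos s).const_mul (1 + c)).sub ((hneg s).const_mul (1 - c))).congr_deriv (by
      simp only [hy]; ring)
  have hinner (s : ℝ) : ⟪q s, a⟫ = y s * ⟪b s, a⟫ - z s := by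
    simp only [hq, inner_sub_left, real_inner_smul_left, haa, ← hc]
    ring
  have hq' (s : ℝ) (hs : 0 ≤ s) : HasDerivAt q (-(n * ⟪q s, a⟫) • b s) s := by
    refine ((((hy' s).smul (hb s hs)).sub ((hz' s).smul_const a)).sub_const _).congr_deriv ?_
    rw [hinner]
    module
  have hcont : ContinuousOn b (Set.Icc 0 t) := fun s hs ↦
    (hb s hs.1).continuousAt.continuousWithinAt
  obtain ⟨C, hC⟩ := isCompact_Icc.exists_bound_of_continuousOn hcont
  have hzero : q t = 0 := by
    refine eq_zero_of_abs_deriv_le_mul_abs_self_of_eq_zero_right (a := 0) (b := t)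
      (K := |n| * C) (fun s hs ↦ (hq' s hs.1).continuousAt.continuousWithinAt)
      (fun s hs ↦ (hq' s hs.1).hasDerivWithinAt) ?_ ?_ t ⟨ht, le_rfl⟩
    · simp only [hq, hy, hz, mul_zero, neg_zero, exp_zero]
      module
    · intro s hs
      have hqa : |⟪q s, a⟫| ≤ ‖q s‖ := by simpa [ha] using abs_real_inner_le_norm (q s) a
      rw [norm_smul, norm_neg, norm_eq_abs, abs_mul]
      calc |n| * |⟪q s, a⟫| * ‖b s‖ ≤ |n| * ‖q s‖ * C := by
            gcongr
            exact hC s ⟨hs.1, hs.2.le⟩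
        _ = |n| * C * ‖q s‖ := by ring
  simpa [hq, sub_sub, sub_eq_zero] using hzero

/-- Solutions of `ḃ = n (a - ⟨b, a⟩ b)`, `n > 0`, starting where `⟨b, a⟩ > -1` converge to the
unit vector `a`. -/
theorem tendsto_of_hasDerivAt_proj {E : Type*} [NormedAddCommGroup E] [InnerProductSpace ℝ E]
    {n : ℝ} (hn : 0 < n) {a : E} (ha : ‖a‖ = 1) {b : ℝ → E}
    (hb : ∀ t ≥ (0 : ℝ), HasDerivAt b (n • (a - ⟪b t, a⟫ • b t)) t)
    (h0 : 0 < 1 + ⟪b 0, a⟫) : Tendsto b atTop (nhds a) := by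
  set c := ⟪b 0, a⟫
  set y : ℝ → ℝ := fun s ↦ (1 + c) * exp (n * s) + (1 - c) * exp (-(n * s)) with hy
  have hlin : Tendsto (fun t : ℝ ↦ n * t) atTop atTop := tendsto_id.const_mul_atTop hn
  have hneg : Tendsto (fun t : ℝ ↦ (1 - c) * exp (-(n * t))) atTop (nhds 0) := by
    simpa using (tendsto_exp_neg_atTop_nhds_zero.comp hlin).const_mul (1 - c)
  have hytop : Tendsto y atTop atTop :=
    ((tendsto_exp_atTop.comp hlin).const_mul_atTop h0).atTop_add hneg
  have hlim : Tendsto (fun t ↦ a + (y t)⁻¹ •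
      ((2 : ℝ) • (b 0 - c • a) - (2 * ((1 - c) * exp (-(n * t)))) • a)) atTop (nhds a) := by
    simpa using ((hytop.inv_tendsto_atTop).smul
      (((hneg.const_mul 2).smul_const a).const_sub ((2 : ℝ) • (b 0 - c • a)))).const_add a
  refine hlim.congr' ?_
  filter_upwards [eventually_ge_atTop 0, hytop.eventually_gt_atTop 0] with t ht hyt
  have hsol : y t • b t = _ := smul_eq_of_hasDerivAt_proj ha hb ht
  have hone : a = (y t)⁻¹ • y t • a := (inv_smul_smul₀ hyt.ne' a).symm
  rw [← inv_smul_smul₀ hyt.ne' (b t), hsol]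
  nth_rewrite 1 [hone]
  rw [← smul_add]
  congr 1
  simp only [hy]
  module

/-- If all neighbors hold their target headings b_j* with b_i* = R(α_j) b_j*, then the
dynamics ḃ = P_b Σ_j R(α_j) b_j* reduce to ḃ = |N| P_b b_i*, and b(t) → b_i* provided
b(0) is a unit vector different from -b_i*. -/
theorem stmt10 {ι : Type*} (N : Finset ι) (hN : N.Nonempty)
    (bis : EuclideanSpace ℝ (Fin 2)) (hbis : ‖bis‖ = 1)
    (bjs : ι → EuclideanSpace ℝ (Fin 2)) (αj : ι → ℝ)
    (hunit : ∀ j ∈ N, ‖bjs j‖ = 1)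
    (hang : ∀ j ∈ N, bis = rot (αj j) (bjs j))
    (b : ℝ → EuclideanSpace ℝ (Fin 2))
    (hb : ∀ t ≥ (0 : ℝ), HasDerivAt b (proj (b t) (∑ j ∈ N, rot (αj j) (bjs j))) t)
    (h0 : ‖b 0‖ = 1) (hne : b 0 ≠ -bis) :
    (∀ t : ℝ, proj (b t) (∑ j ∈ N, rot (αj j) (bjs j)) = (N.card : ℝ) • proj (b t) bis)
    ∧ Filter.Tendsto b Filter.atTop (nhds bis) := by
  have hsum : ∑ j ∈ N, rot (αj j) (bjs j) = (N.card : ℝ) • bis := by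
    rw [← Finset.sum_congr rfl hang, Finset.sum_const, Nat.cast_smul_eq_nsmul]
  have hproj (t : ℝ) : proj (b t) (∑ j ∈ N, rot (αj j) (bjs j)) =
      (N.card : ℝ) • proj (b t) bis := by
    rw [hsum, proj, proj, real_inner_smul_right, smul_sub, smul_smul]
  refine ⟨hproj, tendsto_of_hasDerivAt_proj (Nat.cast_pos.mpr hN.card_pos) hbis
    (fun t ht ↦ (hb t ht).congr_deriv (hproj t)) ?_⟩
  have hpos : 0 < ‖b 0 + bis‖ ^ 2 :=
    pow_pos (norm_pos_iff.mpr fun h ↦ hne (eq_neg_of_add_eq_zero_left h)) 2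
  rw [norm_add_sq_real, h0, hbis] at hpos
  linarith
end

section
/- Let n ≥ 2 and let p₁, …, pₙ ∈ ℝ² be fixed positions and p* ∈ ℝ² a target point with p* ≠ p_i for all i. Define the target headings b_i* := (p* − p_i)/‖p* − p_i‖. Suppose the communication graph is a rooted out-branching topologically ordered so that each agent i ∈ {2, …, n} has a nonempty neighbor set N_i ⊆ {1, …, i−1}, and for each i ≥ 2 and each j ∈ N_i an angle α_{ij} ∈ ℝ is given with b_i* = R(α_{ij}) b_j*. Consider the closed-loop dynamics ḃ₁ = P_{b₁} b₁*, and ḃ_i = P_{b_i} Σ_{j ∈ N_i} R(α_{ij}) b_j for i = 2, …, n. Then for (Lebesgue-)almost every vector of initial angles (θ₁, …, θₙ) ∈ ℝⁿ, every differentiable solution (b₁, …, bₙ) : [0, ∞) → (ℝ²)ⁿ of this system with b_i(0) = (cos θ_i, sin θ_i) satisfies b_i(t) → b_i* for every i as t → ∞; in particular b₁ → b₁* and b_i − R(α_{ij}) b_j → 0 for every edge (j, i), so all headings asymptotically point toward the common target p*. -/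
open scoped RealInnerProductSpace
open Real Filter MeasureTheory

section GlobalFlow

variable {E : Type*} [NormedAddCommGroup E] [NormedSpace ℝ E] {F : E → E} {K : NNReal}

/-- A bounded Lipschitz vector field has a global integral curve through every point. -/
theorem exists_global_integral_curve [CompleteSpace E] {M : NNReal} (hF : LipschitzWith K F)
    (hM : ∀ x, ‖F x‖ ≤ M) (x : E) :
    ∃ φ : ℝ → E, φ 0 = x ∧ ∀ t, HasDerivAt φ (F (φ t)) t := by
  have hloc : ∀ k : ℕ, ∃ φ : ℝ → E, φ 0 = x ∧
      ∀ t ∈ Set.Ioo (-(k + 1 : ℝ)) (k + 1), HasDerivAt φ (F (φ t)) t := by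
    intro k
    have hmem : (0 : ℝ) ∈ Set.Icc (-(k + 1 : ℝ)) (k + 1) := by
      have hk : (0 : ℝ) ≤ k := k.cast_nonneg
      constructor <;> linarith
    have hPL : IsPicardLindelof (fun _ : ℝ => F) (⟨0, hmem⟩ : Set.Icc (-(k + 1 : ℝ)) (k + 1)) x
        (M * (k + 1)) 0 M K :=
      { lipschitzOnWith := fun _ _ => hF.lipschitzOnWith
        continuousOn := fun _ _ => continuousOn_const
        norm_le := fun _ _ y _ => hM y
        mul_max_le := by simp }
    obtain ⟨φ, h0, hφ⟩ := hPL.exists_eq_forall_mem_Icc_hasDerivWithinAt₀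
    exact ⟨φ, h0, fun t ht =>
      (hφ t (Set.Ioo_subset_Icc_self ht)).hasDerivAt (Icc_mem_nhds ht.1 ht.2)⟩
  choose φ h0 hφ using hloc
  have hagree : ∀ k l : ℕ, k ≤ l → Set.EqOn (φ k) (φ l) (Set.Ioo (-(k + 1 : ℝ)) (k + 1)) := by
    intro k l hkl
    have hkl' : (k : ℝ) ≤ l := by exact_mod_cast hkl
    have hk : (0 : ℝ) ≤ k := k.cast_nonneg
    refine ODE_solution_unique_of_mem_Ioo (v := fun _ => F) (s := fun _ => Set.univ) (t₀ := 0)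
      (fun _ _ => hF.lipschitzOnWith) ⟨by linarith, by linarith⟩
      (fun t ht => ⟨hφ k t ht, trivial⟩)
      (fun t ht => ⟨hφ l t ⟨by linarith [ht.1], by linarith [ht.2]⟩, trivial⟩) ?_
    rw [h0, h0]
  have hceil : ∀ s : ℝ, s ∈ Set.Ioo (-((⌈|s|⌉₊ : ℝ) + 1)) ((⌈|s|⌉₊ : ℝ) + 1) := by
    intro s
    have h := Nat.le_ceil |s|
    exact ⟨by linarith [neg_abs_le s], by linarith [le_abs_self s]⟩
  have hglue : ∀ (m : ℕ), ∀ s ∈ Set.Ioo (-(m + 1 : ℝ)) (m + 1), φ ⌈|s|⌉₊ s = φ m s := by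
    intro m s hs
    rcases le_total ⌈|s|⌉₊ m with h | h
    · exact hagree _ _ h (hceil s)
    · exact (hagree _ _ h hs).symm
  refine ⟨fun s => φ ⌈|s|⌉₊ s, h0 _, fun t => ?_⟩
  refine (hφ ⌈|t|⌉₊ t (hceil t)).congr_of_eventuallyEq ?_
  filter_upwards [Ioo_mem_nhds (hceil t).1 (hceil t).2] with s hs using hglue _ s hs

/-- Integral curves of a Lipschitz vector field depend continuously on the initial point. -/
theorem continuous_integral_curve_initial {φ : E → ℝ → E} (hF : LipschitzWith K F)
    (h0 : ∀ x, φ x 0 = x) (hφ : ∀ x t, HasDerivAt (φ x) (F (φ x t)) t) {t : ℝ} (ht : 0 ≤ t) :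
    Continuous fun x => φ x t := by
  have hL : LipschitzWith (Real.exp (K * t)).toNNReal fun x => φ x t := by
    refine LipschitzWith.of_dist_le_mul fun x y => ?_
    rw [Real.coe_toNNReal _ (Real.exp_nonneg _), mul_comm]
    have := dist_le_of_trajectories_ODE (v := fun _ => F) (f := φ x) (g := φ y) (a := 0) (b := t)
      (δ := dist x y) (fun _ => hF)
      (fun s _ => (hφ x s).continuousAt.continuousWithinAt) (fun s _ => (hφ x s).hasDerivWithinAt)
      (fun s _ => (hφ y s).continuousAt.continuousWithinAt) (fun s _ => (hφ y s).hasDerivWithinAt)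
      (by rw [h0, h0]) t ⟨ht, le_rfl⟩
    simpa using this
  exact hL.continuous

end GlobalFlow

section ScalarODE

/-- A solution of a scalar linear equation that vanishes once vanishes identically. -/
theorem linear_ode_eq_zero {f g : ℝ → ℝ} (hg : ContinuousOn g (Set.Ici 0))
    (hf : ∀ t ≥ 0, HasDerivAt f (g t * f t) t) {T : ℝ} (hT : 0 ≤ T) (hfT : f T = 0) :
    ∀ t ≥ 0, f t = 0 := by
  set h : ℝ → ℝ := fun s => g (max s 0) with hh
  have hc : Continuous h :=
    hg.comp_continuous (by fun_prop) fun s => le_max_right s 0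
  set G : ℝ → ℝ := fun t => ∫ s in (0 : ℝ)..t, h s with hG
  have hG' : ∀ t, HasDerivAt G (h t) t := fun t => hc.integral_hasStrictDerivAt 0 t |>.hasDerivAt
  have hq : ∀ t ≥ 0, HasDerivAt (fun t => f t * Real.exp (-G t)) 0 t := by
    intro t ht
    have hgt : h t = g t := by simp [hh, max_eq_left ht]
    refine ((hf t ht).fun_mul (hG' t).fun_neg.exp).congr_deriv ?_
    rw [hgt]; ring
  have hconst : ∀ t ≥ 0, f t * Real.exp (-G t) = f 0 * Real.exp (-G 0) := by
    intro t ht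
    exact constant_of_has_deriv_right_zero (a := 0) (b := t)
      (fun s hs => (hq s hs.1).continuousAt.continuousWithinAt)
      (fun s hs => (hq s hs.1).hasDerivWithinAt) t ⟨ht, le_rfl⟩
  intro t ht
  have h1 := hconst t ht
  rw [← hconst T hT, hfT, zero_mul] at h1
  exact (mul_eq_zero.1 h1).resolve_right (Real.exp_ne_zero _)

/-- A function whose derivative is at least `δ > 0` while its value lies in `[a, b]` eventually
stays above `b` as soon as it has reached `a`. -/
theorem eventually_ge_of_deriv_ge {f f' : ℝ → ℝ} {a b δ T : ℝ} (hab : a ≤ b) (hδ : 0 < δ)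
    (hf : ∀ t ≥ T, HasDerivAt f (f' t) t) (hf' : ∀ t ≥ T, a ≤ f t → f t ≤ b → δ ≤ f' t)
    (ha : a ≤ f T) : ∀ᶠ t in atTop, b ≤ f t := by
  have hcross : ∀ S ≥ T, ∀ c s R : ℝ, s < δ → c ≤ f S → a ≤ c → 0 ≤ s → S ≤ R →
      c + s * (R - S) ≤ b → c + s * (R - S) ≤ f R := by
    intro S hS c s R hs hcS hac hs0 hSR hb
    have := image_le_of_deriv_right_lt_deriv_boundary (f := fun t => -f t) (f' := fun t => -f' t)
      (a := S) (b := R) (B := fun t => -(c + s * (t - S))) (B' := fun _ => -s)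
      (fun t ht => (hf t (hS.le.trans ht.1)).neg.continuousAt.continuousWithinAt)
      (fun t ht => (hf t (hS.le.trans ht.1)).neg.hasDerivWithinAt) (by simpa using hcS)
      (fun t => ((((hasDerivAt_id' t).sub_const S).const_mul s).const_add c).fun_neg.congr_deriv
        (by simp))
      (fun t ht heq => by
        have heq' : f t = c + s * (t - S) := by linarith
        have h1 : 0 ≤ s * (t - S) := mul_nonneg hs0 (by linarith [ht.1])
        have h2 : s * (t - S) ≤ s * (R - S) :=
          mul_le_mul_of_nonneg_left (by linarith [ht.2]) hs0
        have := hf' t (hS.le.trans ht.1) (by linarith) (by linarith)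
        linarith)
      (Set.right_mem_Icc.2 hSR)
    linarith
  set R := T + (b - a) / (δ / 2) with hR
  have hTR : T ≤ R := by
    have : 0 ≤ (b - a) / (δ / 2) := div_nonneg (by linarith) (by linarith)
    linarith
  have hRT : a + δ / 2 * (R - T) = b := by
    rw [hR]; field_simp; ring
  have hbR : b ≤ f R := by
    have := hcross T le_rfl a (δ / 2) R (by linarith) ha le_rfl (by linarith) hTR hRT.le
    linarith
  filter_upwards [eventually_ge_atTop R] with t ht
  simpa using hcross R hTR b 0 t hδ hbR hab le_rfl ht (by simp)

end ScalarODE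

section ProjectedDynamics

variable {b c u : ℝ → EuclideanSpace ℝ (Fin 2)}

theorem norm_eq_one_of_projected (hu : ContinuousOn u (Set.Ici 0))
    (hb : ∀ t ≥ 0, HasDerivAt b (proj (b t) (u t)) t) (h0 : ‖b 0‖ = 1) :
    ∀ t ≥ 0, ‖b t‖ = 1 := by
  have hbc : ContinuousOn b (Set.Ici 0) := fun t ht => (hb t ht).continuousAt.continuousWithinAt
  have key := linear_ode_eq_zero (f := fun t => 1 - ⟪b t, b t⟫) (g := fun t => -(2 * ⟪b t, u t⟫))
    (by fun_prop)
    (fun t ht => by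
      refine (((hb t ht).inner ℝ (hb t ht)).const_sub 1).congr_deriv ?_
      simp only [proj, inner_sub_left, inner_sub_right, real_inner_smul_left,
        real_inner_smul_right, real_inner_comm (b t) (u t)]
      ring)
    le_rfl (by simp [h0])
  intro t ht
  have := key t ht
  simp only [real_inner_self_eq_norm_sq] at this
  nlinarith [norm_nonneg (b t)]

theorem hasDerivAt_one_sub_inner_of_projected {t : ℝ} (hb : HasDerivAt b (proj (b t) (u t)) t)
    (hc : HasDerivAt c (proj (c t) (u t)) t) :
    HasDerivAt (fun t => 1 - ⟪b t, c t⟫) (-(⟪b t, u t⟫ + ⟪c t, u t⟫) * (1 - ⟪b t, c t⟫)) t := by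
  refine ((hb.inner ℝ hc).const_sub 1).congr_deriv ?_
  simp only [proj, inner_sub_left, inner_sub_right, real_inner_smul_left,
    real_inner_smul_right, real_inner_comm (c t) (u t)]
  ring

/-- Two unit solutions of the same projected equation that meet once coincide. -/
theorem projected_eqOn (hu : ContinuousOn u (Set.Ici 0))
    (hb : ∀ t ≥ 0, HasDerivAt b (proj (b t) (u t)) t)
    (hc : ∀ t ≥ 0, HasDerivAt c (proj (c t) (u t)) t) (hb0 : ‖b 0‖ = 1) (hc0 : ‖c 0‖ = 1)
    {T : ℝ} (hT : 0 ≤ T) (hbcT : ⟪b T, c T⟫ = 1) : ∀ t ≥ 0, b t = c t := by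
  have hbc : ContinuousOn b (Set.Ici 0) := fun t ht => (hb t ht).continuousAt.continuousWithinAt
  have hcc : ContinuousOn c (Set.Ici 0) := fun t ht => (hc t ht).continuousAt.continuousWithinAt
  have key := linear_ode_eq_zero (f := fun t => 1 - ⟪b t, c t⟫)
    (g := fun t => -(⟪b t, u t⟫ + ⟪c t, u t⟫)) (by fun_prop)
    (fun t ht => hasDerivAt_one_sub_inner_of_projected (hb t ht) (hc t ht)) hT
    (by simp [hbcT])
  intro t ht
  exact (inner_eq_one_iff_of_norm_eq_one (𝕜 := ℝ) (norm_eq_one_of_projected hu hb hb0 t ht)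
    (norm_eq_one_of_projected hu hc hc0 t ht)).1 (by linarith [key t ht])

variable {e : EuclideanSpace ℝ (Fin 2)} {m : ℝ}

/-- At most one unit solution converges to the direction opposite to the limiting input. -/
theorem projected_unique_of_tendsto_neg (hu : ContinuousOn u (Set.Ici 0)) (hm : 0 < m)
    (he : ‖e‖ = 1) (hulim : Tendsto u atTop (nhds (m • e)))
    (hb : ∀ t ≥ 0, HasDerivAt b (proj (b t) (u t)) t)
    (hc : ∀ t ≥ 0, HasDerivAt c (proj (c t) (u t)) t) (hb0 : ‖b 0‖ = 1) (hc0 : ‖c 0‖ = 1)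
    (hblim : Tendsto b atTop (nhds (-e))) (hclim : Tendsto c atTop (nhds (-e))) :
    b 0 = c 0 := by
  have hzlim : Tendsto (fun t => 1 - ⟪b t, c t⟫) atTop (nhds 0) := by
    have := (hblim.inner (𝕜 := ℝ) hclim).const_sub 1
    simpa [he] using this
  have hglim : Tendsto (fun t => -(⟪b t, u t⟫ + ⟪c t, u t⟫)) atTop (nhds (2 * m)) := by
    have := ((hblim.inner (𝕜 := ℝ) hulim).add (hclim.inner (𝕜 := ℝ) hulim)).neg
    have h2 : -(⟪-e, m • e⟫ + ⟪-e, m • e⟫) = 2 * m := by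
      simp [real_inner_smul_right, he]; ring
    rwa [h2] at this
  obtain ⟨T, hT⟩ := eventually_atTop.1
    ((eventually_ge_atTop (0 : ℝ)).and (hglim.eventually (lt_mem_nhds (by linarith : 0 < 2 * m))))
  have hT0 : 0 ≤ T := (hT T le_rfl).1
  have hd := fun t ht => hasDerivAt_one_sub_inner_of_projected (hb t ht) (hc t ht)
  have hz : ∀ t ≥ 0, 0 ≤ 1 - ⟪b t, c t⟫ := by
    intro t ht
    have := real_inner_le_norm (b t) (c t)
    rw [norm_eq_one_of_projected hu hb hb0 t ht, norm_eq_one_of_projected hu hc hc0 t ht] at this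
    linarith
  have hmono : MonotoneOn (fun t => 1 - ⟪b t, c t⟫) (Set.Ici T) := by
    refine monotoneOn_of_hasDerivWithinAt_nonneg (convex_Ici T)
      (fun t ht => (hd t (hT0.trans ht)).continuousAt.continuousWithinAt)
      (fun t ht => (hd t (hT0.trans (interior_subset ht))).hasDerivWithinAt) fun t ht => ?_
    have ht' : T ≤ t := interior_subset ht
    exact mul_nonneg (hT t ht').2.le (hz t (hT0.trans ht'))
  have hle : 1 - ⟪b T, c T⟫ ≤ 0 :=
    ge_of_tendsto hzlim ((eventually_ge_atTop T).mono fun t ht => hmono Set.self_mem_Ici ht ht)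
  exact projected_eqOn hu hb hc hb0 hc0 hT0 (by linarith [hz T hT0]) 0 le_rfl

theorem tendsto_of_inner_tendsto_one (he : ‖e‖ = 1) (hb : ∀ t ≥ 0, ‖b t‖ = 1)
    (h : Tendsto (fun t => ⟪b t, e⟫) atTop (nhds 1)) : Tendsto b atTop (nhds e) := by
  rw [tendsto_iff_norm_sub_tendsto_zero]
  have hs : Tendsto (fun t => √(2 - 2 * ⟪b t, e⟫)) atTop (nhds 0) := by
    simpa using ((h.const_mul 2).const_sub 2).sqrt
  refine hs.congr' ((eventually_ge_atTop 0).mono fun t ht => ?_)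
  have hsq : 2 - 2 * ⟪b t, e⟫ = ‖b t - e‖ ^ 2 := by
    rw [norm_sub_sq_real, hb t ht, he]; ring
  rw [hsq, Real.sqrt_sq (norm_nonneg _)]

/-- If the input converges to `m • e` with `m > 0`, a unit solution converges to `e` or `-e`. -/
theorem projected_tendsto_or_tendsto_neg (hu : ContinuousOn u (Set.Ici 0)) (hm : 0 < m)
    (he : ‖e‖ = 1) (hulim : Tendsto u atTop (nhds (m • e)))
    (hb : ∀ t ≥ 0, HasDerivAt b (proj (b t) (u t)) t) (hb0 : ‖b 0‖ = 1) :
    Tendsto b atTop (nhds e) ∨ Tendsto b atTop (nhds (-e)) := by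
  have hn := norm_eq_one_of_projected hu hb hb0
  set V : ℝ → ℝ := fun t => ⟪b t, e⟫ with hV
  set V' : ℝ → ℝ := fun t => ⟪u t, e⟫ - ⟪b t, u t⟫ * V t with hV'
  have hVd : ∀ t ≥ 0, HasDerivAt V (V' t) t := by
    intro t ht
    refine ((hb t ht).inner ℝ (hasDerivAt_const t e)).congr_deriv ?_
    simp [proj, inner_sub_left, real_inner_smul_left, hV', hV]
  have hVabs : ∀ t ≥ 0, |V t| ≤ 1 := by
    intro t ht
    have := abs_real_inner_le_norm (b t) e
    rwa [hn t ht, he, one_mul] at this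
  have hV'lower : ∀ t ≥ 0, m * (1 - V t ^ 2) - 2 * ‖u t - m • e‖ ≤ V' t := by
    intro t ht
    have h1 : V' t = ⟪u t - m • e, e⟫ - ⟪b t, u t - m • e⟫ * V t + m * (1 - V t ^ 2) := by
      simp only [hV', hV, inner_sub_left, inner_sub_right, real_inner_smul_left,
        real_inner_smul_right, real_inner_self_eq_norm_sq, he]
      ring
    have h2 : |⟪u t - m • e, e⟫| ≤ ‖u t - m • e‖ := by
      simpa [he] using abs_real_inner_le_norm (u t - m • e) e
    have h3 : |⟪b t, u t - m • e⟫ * V t| ≤ ‖u t - m • e‖ := by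
      have := abs_real_inner_le_norm (b t) (u t - m • e)
      rw [hn t ht, one_mul] at this
      rw [abs_mul]
      calc _ ≤ ‖u t - m • e‖ * 1 :=
            mul_le_mul this (hVabs t ht) (abs_nonneg _) (norm_nonneg _)
        _ = _ := mul_one _
    linarith [neg_abs_le ⟪u t - m • e, e⟫, le_abs_self (⟪b t, u t - m • e⟫ * V t)]
  have hdich : ∀ ε : ℝ, 0 < ε → ε < 1 →
      (∀ᶠ t in atTop, 1 - ε ≤ V t) ∨ ∀ᶠ t in atTop, V t ≤ -(1 - ε) := by
    intro ε hε hε1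
    have hlim : Tendsto (fun t => 2 * ‖u t - m • e‖) atTop (nhds 0) := by
      simpa using (tendsto_iff_norm_sub_tendsto_zero.1 hulim).const_mul 2
    obtain ⟨T, hT⟩ := eventually_atTop.1 ((eventually_ge_atTop (0 : ℝ)).and
      (hlim.eventually (gt_mem_nhds (by positivity : 0 < m * ε / 2))))
    by_cases hex : ∃ S ≥ T, -(1 - ε) ≤ V S
    · obtain ⟨S, hS, hVS⟩ := hex
      refine .inl (eventually_ge_of_deriv_ge (by linarith) (by positivity : 0 < m * ε / 2)
        (fun t ht => hVd t (hT t (hS.le.trans ht)).1) (fun t ht h1 h2 => ?_) hVS)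
      obtain ⟨ht0, htε⟩ := hT t (hS.le.trans ht)
      have hsq : V t ^ 2 ≤ (1 - ε) ^ 2 := sq_le_sq' h1 h2
      have : m * ε ≤ m * (1 - V t ^ 2) := mul_le_mul_of_nonneg_left (by nlinarith) hm.le
      linarith [hV'lower t ht0]
    · push Not at hex
      exact .inr ((eventually_ge_atTop T).mono fun t ht => (hex t ht).le)
  by_cases hhalf : ∀ᶠ t in atTop, (1 / 2 : ℝ) ≤ V t
  · left
    refine tendsto_of_inner_tendsto_one he hn (tendsto_order.2 ⟨fun a ha => ?_, fun a ha => ?_⟩)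
    · rcases hdich (min ((1 - a) / 2) (1 / 2)) (by simp; linarith) (by norm_num) with h | h
      · filter_upwards [h] with t ht
        have := min_le_left ((1 - a) / 2) (1 / 2 : ℝ)
        change a < V t
        linarith
      · exfalso
        obtain ⟨t, h1, h2⟩ := (hhalf.and h).exists
        linarith [min_le_right ((1 - a) / 2) (1 / 2 : ℝ)]
    · filter_upwards [eventually_ge_atTop 0] with t ht
      exact (le_of_abs_le (hVabs t ht)).trans_lt ha
  · right
    refine tendsto_of_inner_tendsto_one (by simpa using he) hn
      (tendsto_order.2 ⟨fun a ha => ?_, fun a ha => ?_⟩)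
    · rcases hdich (min ((1 - a) / 2) (1 / 2)) (by simp; linarith) (by norm_num) with h | h
      · exfalso
        refine hhalf (h.mono fun t ht => ?_)
        linarith [min_le_right ((1 - a) / 2) (1 / 2 : ℝ)]
      · filter_upwards [h] with t ht
        have := min_le_left ((1 - a) / 2) (1 / 2 : ℝ)
        rw [inner_neg_right]
        change a < -V t
        linarith
    · filter_upwards [eventually_ge_atTop 0] with t ht
      rw [inner_neg_right]
      have := neg_abs_le (V t)
      change -V t < a
      linarith [hVabs t ht]

end ProjectedDynamics

section PlaneRotations

theorem norm_dir (θ : ℝ) : ‖dir θ‖ = 1 := by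
  simp [dir, EuclideanSpace.norm_eq]

theorem rot_dir (α θ : ℝ) : rot α (dir θ) = dir (θ + α) := by
  ext k
  fin_cases k <;> simp [rot, dir, Real.cos_add, Real.sin_add] <;> ring

theorem proj_dir_dir (θ ψ : ℝ) :
    proj (dir θ) (dir ψ) = Real.sin (ψ - θ) • dir (θ + π / 2) := by
  have h := Real.sin_sq_add_cos_sq θ
  ext k
  fin_cases k
  · simp [proj, dir, PiLp.inner_apply, Fin.sum_univ_two, Real.sin_sub, Real.cos_add_pi_div_two]
    linear_combination (-Real.cos ψ) * h
  · simp [proj, dir, PiLp.inner_apply, Fin.sum_univ_two, Real.sin_sub, Real.sin_add_pi_div_two]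
    linear_combination (-Real.sin ψ) * h

theorem proj_sum {ι : Type*} (s : Finset ι) (b : EuclideanSpace ℝ (Fin 2))
    (v : ι → EuclideanSpace ℝ (Fin 2)) : proj b (∑ j ∈ s, v j) = ∑ j ∈ s, proj b (v j) := by
  simp [proj, inner_sum, Finset.sum_smul]

theorem continuous_dir : Continuous dir := by
  refine (PiLp.continuous_toLp 2 fun _ : Fin 2 => ℝ).comp (continuous_pi fun k => ?_)
  fin_cases k
  · exact Real.continuous_cos
  · exact Real.continuous_sin

theorem continuous_rot (α : ℝ) : Continuous (rot α) := by
  refine (PiLp.continuous_toLp 2 fun _ : Fin 2 => ℝ).comp (continuous_pi fun k => ?_)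
  fin_cases k <;> simp <;> fun_prop

theorem HasDerivAt.dir {x : ℝ → ℝ} {x' t : ℝ} (hx : HasDerivAt x x' t) :
    HasDerivAt (fun t => dir (x t)) (x' • dir (x t + π / 2)) t := by
  have h : HasDerivAt (fun t => ![Real.cos (x t), Real.sin (x t)])
      ![-Real.sin (x t) * x', Real.cos (x t) * x'] t := by
    refine hasDerivAt_pi.2 fun k => ?_
    fin_cases k
    · exact hx.cos
    · exact hx.sin
  refine ((PiLp.continuousLinearEquiv 2 ℝ fun _ : Fin 2 => ℝ).symm.hasFDerivAt.comp_hasDerivAt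
    t h).congr_deriv ?_
  ext k
  fin_cases k <;>
    simp [_root_.dir, Real.cos_add_pi_div_two, Real.sin_add_pi_div_two, mul_comm]

theorem exists_eq_dir {e : EuclideanSpace ℝ (Fin 2)} (he : ‖e‖ = 1) : ∃ β, e = dir β := by
  have hsq : e 0 ^ 2 + e 1 ^ 2 = 1 := by
    have := EuclideanSpace.real_norm_sq_eq e
    rw [he, Fin.sum_univ_two] at this
    linarith
  have hz : ‖(⟨e 0, e 1⟩ : ℂ)‖ = 1 := by
    rw [Complex.norm_def, Complex.normSq_mk, Real.sqrt_eq_one]; linarith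
  have hz0 : (⟨e 0, e 1⟩ : ℂ) ≠ 0 := by
    rw [← norm_ne_zero_iff, hz]; exact one_ne_zero
  refine ⟨Complex.arg ⟨e 0, e 1⟩, ?_⟩
  ext k
  fin_cases k
  · simp [dir, Complex.cos_arg hz0, hz]
  · simp [dir, Complex.sin_arg, hz]

theorem countable_dir_preimage (v : EuclideanSpace ℝ (Fin 2)) : {x | dir x = v}.Countable := by
  rcases Set.eq_empty_or_nonempty {x | dir x = v} with h | ⟨y, hy⟩
  · rw [h]; exact Set.countable_empty
  refine (Set.countable_range fun k : ℤ => y + 2 * π * k).mono fun x hx => ?_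
  have hxy : dir x = dir y := Eq.trans hx (Eq.symm hy)
  have hcos : Real.cos x = Real.cos y := by
    simpa [dir] using congrArg (fun w : EuclideanSpace ℝ (Fin 2) => w 0) hxy
  have hsin : Real.sin x = Real.sin y := by
    simpa [dir] using congrArg (fun w : EuclideanSpace ℝ (Fin 2) => w 1) hxy
  obtain ⟨k, hk⟩ := Real.Angle.angle_eq_iff_two_pi_dvd_sub.1 (Real.Angle.cos_sin_inj hcos hsin)
  exact ⟨k, by change y + 2 * π * k = x; linarith⟩

end PlaneRotations

section HeadingNetwork

variable {n : ℕ} (N : Fin (n + 2) → Finset (Fin (n + 2))) (α : Fin (n + 2) → Fin (n + 2) → ℝ)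

/-- The vector that drives agent `i`: the target heading `e` for the root, the sum of the rotated
neighbor headings for any other agent. -/
noncomputable def headingInput (e : EuclideanSpace ℝ (Fin 2)) (i : Fin (n + 2))
    (b : Fin (n + 2) → EuclideanSpace ℝ (Fin 2)) : EuclideanSpace ℝ (Fin 2) :=
  if i = 0 then e else ∑ j ∈ N i, rot (α i j) (b j)

/-- The closed-loop heading dynamics in nonnegative time. -/
def IsHeadingSolution (e : EuclideanSpace ℝ (Fin 2))
    (b : Fin (n + 2) → ℝ → EuclideanSpace ℝ (Fin 2)) : Prop :=
  ∀ i, ∀ t ≥ (0 : ℝ), HasDerivAt (b i) (proj (b i t) (headingInput N α e i fun j => b j t)) t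

/-- The closed-loop vector field in angular coordinates, the root being steered to angle `β`. -/
noncomputable def angleField (β : ℝ) (φ : Fin (n + 2) → ℝ) (i : Fin (n + 2)) : ℝ :=
  if i = 0 then Real.sin (β - φ i) else ∑ j ∈ N i, Real.sin (φ j + α i j - φ i)

variable {N α}

theorem proj_headingInput_dir (β : ℝ) (φ : Fin (n + 2) → ℝ) (i : Fin (n + 2)) :
    proj (dir (φ i)) (headingInput N α (dir β) i fun j => dir (φ j)) =
      angleField N α β φ i • dir (φ i + π / 2) := by
  unfold headingInput angleField
  split_ifs
  · rw [proj_dir_dir]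
  · simp only [proj_sum, rot_dir, proj_dir_dir, Finset.sum_smul]

theorem lipschitzWith_angleField (β : ℝ) :
    LipschitzWith (2 * (n + 2)) (angleField N α β) := by
  refine LipschitzWith.of_dist_le_mul fun x y => (dist_pi_le_iff (by positivity)).2 fun i => ?_
  have hc : ∀ j, |x j - y j| ≤ dist x y := fun j => dist_le_pi_dist x y j
  have hd : 0 ≤ dist x y := dist_nonneg
  have hn : (0 : ℝ) ≤ n := n.cast_nonneg
  rw [Real.dist_eq]
  push_cast
  unfold angleField
  split_ifs
  · have h1 := Real.abs_sin_sub_sin_le (β - x i) (β - y i)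
    rw [sub_sub_sub_cancel_left, abs_sub_comm (y i)] at h1
    nlinarith [hc i]
  · rw [← Finset.sum_sub_distrib]
    calc _ ≤ ∑ j ∈ N i, |Real.sin (x j + α i j - x i) - Real.sin (y j + α i j - y i)| :=
          Finset.abs_sum_le_sum_abs _ _
      _ ≤ ∑ j ∈ N i, 2 * dist x y := by
          refine Finset.sum_le_sum fun j _ => (Real.abs_sin_sub_sin_le _ _).trans ?_
          rw [show x j + α i j - x i - (y j + α i j - y i) = (x j - y j) - (x i - y i) by ring]
          linarith [abs_sub (x j - y j) (x i - y i), hc i, hc j]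
      _ = (N i).card * (2 * dist x y) := by rw [Finset.sum_const, nsmul_eq_mul]
      _ ≤ (n + 2) * (2 * dist x y) := by
          have : ((N i).card : ℝ) ≤ n + 2 := by
            exact_mod_cast (Finset.card_le_univ (N i)).trans_eq (Fintype.card_fin _)
          gcongr
      _ = _ := by ring

theorem norm_angleField_le (β : ℝ) (φ : Fin (n + 2) → ℝ) :
    ‖angleField N α β φ‖ ≤ ((n + 2 : NNReal) : ℝ) := by
  have hn : (0 : ℝ) ≤ n := n.cast_nonneg
  refine (pi_norm_le_iff_of_nonneg (by positivity)).2 fun i => ?_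
  rw [Real.norm_eq_abs]
  push_cast
  unfold angleField
  split_ifs
  · linarith [Real.abs_sin_le_one (β - φ i)]
  · calc _ ≤ ∑ j ∈ N i, |Real.sin (φ j + α i j - φ i)| := Finset.abs_sum_le_sum_abs _ _
      _ ≤ ∑ j ∈ N i, (1 : ℝ) := Finset.sum_le_sum fun j _ => Real.abs_sin_le_one _
      _ = (N i).card := by simp
      _ ≤ n + 2 := by exact_mod_cast (Finset.card_le_univ (N i)).trans_eq (Fintype.card_fin _)

theorem headingInput_congr (horder : ∀ i, ∀ j ∈ N i, j < i) (e : EuclideanSpace ℝ (Fin 2))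
    (i : Fin (n + 2)) {b c : Fin (n + 2) → EuclideanSpace ℝ (Fin 2)} (h : ∀ j < i, b j = c j) :
    headingInput N α e i b = headingInput N α e i c := by
  unfold headingInput
  split_ifs
  · rfl
  · exact Finset.sum_congr rfl fun j hj => by rw [h j (horder i j hj)]

variable {e : EuclideanSpace ℝ (Fin 2)} {b c : Fin (n + 2) → ℝ → EuclideanSpace ℝ (Fin 2)}

theorem IsHeadingSolution.continuousOn_input (hb : IsHeadingSolution N α e b) (i : Fin (n + 2)) :
    ContinuousOn (fun t => headingInput N α e i fun j => b j t) (Set.Ici 0) := by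
  unfold headingInput
  split_ifs
  · exact continuousOn_const
  · exact continuousOn_finsetSum _ fun j _ => (continuous_rot _).comp_continuousOn fun t ht =>
      (hb j t ht).continuousAt.continuousWithinAt

/-- The headings of the agents up to `i` are determined by their own initial values. -/
theorem IsHeadingSolution.eq_of_initial (horder : ∀ i, ∀ j ∈ N i, j < i)
    (hb : IsHeadingSolution N α e b) (hc : IsHeadingSolution N α e c) (hb0 : ∀ i, ‖b i 0‖ = 1)
    (i : Fin (n + 2)) (h0 : ∀ j ≤ i, b j 0 = c j 0) : ∀ t ≥ 0, b i t = c i t := by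
  induction i using WellFoundedLT.induction with
  | _ i ih =>
    have hlt : ∀ j < i, ∀ t ≥ 0, b j t = c j t := fun j hj =>
      ih j hj fun k hk => h0 k (hk.trans hj.le)
    have hi := h0 i le_rfl
    refine projected_eqOn (hb.continuousOn_input i) (hb i) (fun t ht => ?_) (hb0 i)
      (hi ▸ hb0 i) le_rfl (by rw [← hi, real_inner_self_eq_norm_sq, hb0 i, one_pow])
    rw [headingInput_congr horder e i fun j hj => hlt j hj t ht]
    exact hc i t ht

variable {bs : Fin (n + 2) → EuclideanSpace ℝ (Fin 2)}

theorem exists_tendsto_headingInput (hroot : ∀ i, i ≠ 0 → (N i).Nonempty)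
    (horder : ∀ i, ∀ j ∈ N i, j < i) (hang : ∀ i, i ≠ 0 → ∀ j ∈ N i, bs i = rot (α i j) (bs j))
    (i : Fin (n + 2)) (hlim : ∀ j < i, Tendsto (b j) atTop (nhds (bs j))) :
    ∃ m : ℝ, 0 < m ∧
      Tendsto (fun t => headingInput N α (bs 0) i fun j => b j t) atTop (nhds (m • bs i)) := by
  unfold headingInput
  split_ifs with hi
  · exact ⟨1, one_pos, by rw [hi, one_smul]; exact tendsto_const_nhds⟩
  · refine ⟨(N i).card, by exact_mod_cast (hroot i hi).card_pos, ?_⟩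
    have hsum : ((N i).card : ℝ) • bs i = ∑ j ∈ N i, rot (α i j) (bs j) := by
      rw [← Finset.sum_congr rfl (hang i hi), Finset.sum_const, Nat.cast_smul_eq_nsmul]
    rw [hsum]
    exact tendsto_finsetSum _ fun j hj =>
      ((continuous_rot _).tendsto _).comp (hlim j (horder i j hj))

theorem IsHeadingSolution.tendsto_or_tendsto_neg (hroot : ∀ i, i ≠ 0 → (N i).Nonempty)
    (horder : ∀ i, ∀ j ∈ N i, j < i) (hang : ∀ i, i ≠ 0 → ∀ j ∈ N i, bs i = rot (α i j) (bs j))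
    (hbs : ∀ i, ‖bs i‖ = 1) (hb : IsHeadingSolution N α (bs 0) b) (hb0 : ∀ i, ‖b i 0‖ = 1)
    (i : Fin (n + 2)) (hlim : ∀ j < i, Tendsto (b j) atTop (nhds (bs j))) :
    Tendsto (b i) atTop (nhds (bs i)) ∨ Tendsto (b i) atTop (nhds (-bs i)) := by
  obtain ⟨m, hm, hu⟩ := exists_tendsto_headingInput hroot horder hang i hlim
  exact projected_tendsto_or_tendsto_neg (hb.continuousOn_input i) hm (hbs i) hu (hb i) (hb0 i)

/-- If no agent up to `i` approaches its antipodal heading along integer times, the heading of `i`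
converges to its target. -/
theorem IsHeadingSolution.tendsto (hroot : ∀ i, i ≠ 0 → (N i).Nonempty)
    (horder : ∀ i, ∀ j ∈ N i, j < i) (hang : ∀ i, i ≠ 0 → ∀ j ∈ N i, bs i = rot (α i j) (bs j))
    (hbs : ∀ i, ‖bs i‖ = 1) (hb : IsHeadingSolution N α (bs 0) b) (hb0 : ∀ i, ‖b i 0‖ = 1)
    (i : Fin (n + 2))
    (hgood : ∀ k ≤ i, ¬ Tendsto (fun m : ℕ => b k m) atTop (nhds (-bs k))) :
    Tendsto (b i) atTop (nhds (bs i)) := by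
  induction i using WellFoundedLT.induction with
  | _ i ih =>
    refine (hb.tendsto_or_tendsto_neg hroot horder hang hbs hb0 i fun j hj =>
      ih j hj fun k hk => hgood k (hk.trans hj.le)).resolve_right fun h => ?_
    exact hgood i le_rfl (h.comp tendsto_natCast_atTop_atTop)

/-- Given the initial headings of the agents before `i`, all of which reach their targets, at most
one initial heading of `i` leads to the antipodal heading. -/
theorem IsHeadingSolution.initial_eq_of_tendsto_neg (hroot : ∀ i, i ≠ 0 → (N i).Nonempty)
    (horder : ∀ i, ∀ j ∈ N i, j < i) (hang : ∀ i, i ≠ 0 → ∀ j ∈ N i, bs i = rot (α i j) (bs j))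
    (hbs : ∀ i, ‖bs i‖ = 1) (hb : IsHeadingSolution N α (bs 0) b)
    (hc : IsHeadingSolution N α (bs 0) c) (hb0 : ∀ i, ‖b i 0‖ = 1) (hc0 : ∀ i, ‖c i 0‖ = 1)
    (i : Fin (n + 2)) (h0 : ∀ j < i, b j 0 = c j 0)
    (hgood : ∀ j < i, ¬ Tendsto (fun m : ℕ => b j m) atTop (nhds (-bs j)))
    (hbi : Tendsto (fun m : ℕ => b i m) atTop (nhds (-bs i)))
    (hci : Tendsto (fun m : ℕ => c i m) atTop (nhds (-bs i))) : b i 0 = c i 0 := by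
  have hlt : ∀ j < i, ∀ t ≥ 0, b j t = c j t := fun j hj =>
    hb.eq_of_initial horder hc hb0 j fun k hk => h0 k (hk.trans_lt hj)
  have hblim : ∀ j < i, Tendsto (b j) atTop (nhds (bs j)) := fun j hj =>
    hb.tendsto hroot horder hang hbs hb0 j fun k hk => hgood k (hk.trans_lt hj)
  have hclim : ∀ j < i, Tendsto (c j) atTop (nhds (bs j)) := fun j hj =>
    (hblim j hj).congr' ((eventually_ge_atTop 0).mono (hlt j hj))
  have hne : bs i ≠ -bs i := by
    intro h
    have hinner : ⟪bs i, bs i⟫ = -⟪bs i, bs i⟫ := by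
      rw [← inner_neg_right, ← h]
    rw [real_inner_self_eq_norm_sq, hbs i] at hinner
    norm_num at hinner
  have hneg : ∀ d : ℝ → EuclideanSpace ℝ (Fin 2),
      Tendsto d atTop (nhds (bs i)) ∨ Tendsto d atTop (nhds (-bs i)) →
      Tendsto (fun m : ℕ => d m) atTop (nhds (-bs i)) → Tendsto d atTop (nhds (-bs i)) :=
    fun d hd hdm => hd.resolve_left fun h =>
      hne (tendsto_nhds_unique (h.comp tendsto_natCast_atTop_atTop) hdm)
  obtain ⟨m, hm, hu⟩ := exists_tendsto_headingInput hroot horder hang i hblim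
  refine projected_unique_of_tendsto_neg (hb.continuousOn_input i) hm (hbs i) hu (hb i)
    (fun t ht => ?_) (hb0 i) (hc0 i)
    (hneg _ (hb.tendsto_or_tendsto_neg hroot horder hang hbs hb0 i hblim) hbi)
    (hneg _ (hc.tendsto_or_tendsto_neg hroot horder hang hbs hc0 i hclim) hci)
  rw [headingInput_congr horder (bs 0) i fun j hj => hlt j hj t ht]
  exact hc i t ht

/-- There is a family of heading solutions, one for every vector of initial angles, that depends
continuously on the initial angles. -/
theorem exists_heading_flow (he : ‖e‖ = 1) :
    ∃ Ψ : (Fin (n + 2) → ℝ) → Fin (n + 2) → ℝ → EuclideanSpace ℝ (Fin 2),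
      (∀ θ, IsHeadingSolution N α e (Ψ θ)) ∧ (∀ θ i, Ψ θ i 0 = dir (θ i)) ∧
        ∀ i, ∀ t ≥ 0, Continuous fun θ => Ψ θ i t := by
  obtain ⟨β, rfl⟩ := exists_eq_dir he
  choose φ hφ0 hφ using
    exists_global_integral_curve (lipschitzWith_angleField (N := N) (α := α) β)
      (norm_angleField_le β)
  refine ⟨fun θ i t => dir (φ θ t i), fun θ i t _ => ?_, fun θ i => by simp [hφ0], fun i t ht => ?_⟩
  · rw [proj_headingInput_dir]
    exact (hasDerivAt_pi.1 (hφ θ t) i).dir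
  · exact continuous_dir.comp ((continuous_apply i).comp
      (continuous_integral_curve_initial (lipschitzWith_angleField β) hφ0 hφ ht))

/-- For almost all initial angles, no agent is the first one to approach its antipodal heading. -/
theorem ae_not_tendsto_neg (hroot : ∀ i, i ≠ 0 → (N i).Nonempty)
    (horder : ∀ i, ∀ j ∈ N i, j < i) (hang : ∀ i, i ≠ 0 → ∀ j ∈ N i, bs i = rot (α i j) (bs j))
    (hbs : ∀ i, ‖bs i‖ = 1)
    {Ψ : (Fin (n + 2) → ℝ) → Fin (n + 2) → ℝ → EuclideanSpace ℝ (Fin 2)}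
    (hΨ : ∀ θ, IsHeadingSolution N α (bs 0) (Ψ θ)) (hΨ0 : ∀ θ i, Ψ θ i 0 = dir (θ i))
    (hΨc : ∀ i, ∀ t ≥ 0, Continuous fun θ => Ψ θ i t) (i : Fin (n + 2)) :
    ∀ᵐ θ : Fin (n + 2) → ℝ ∂volume,
      (∀ j < i, ¬ Tendsto (fun m : ℕ => Ψ θ j m) atTop (nhds (-bs j))) →
        ¬ Tendsto (fun m : ℕ => Ψ θ i m) atTop (nhds (-bs i)) := by
  have hmeas : ∀ j, MeasurableSet
      {θ : Fin (n + 2) → ℝ | Tendsto (fun m : ℕ => Ψ θ j m) atTop (nhds (-bs j))} := fun j =>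
    measurableSet_tendsto _ fun m : ℕ => (hΨc j m m.cast_nonneg).measurable
  have hΨn : ∀ θ i, ‖Ψ θ i 0‖ = 1 := fun θ i => by rw [hΨ0, norm_dir]
  refine ae_mem_of_ae_add_linearMap_mem (LinearMap.single ℝ (fun _ : Fin (n + 2) => ℝ) i) volume
    volume (s := {θ | (∀ j < i, ¬ Tendsto (fun m : ℕ => Ψ θ j m) atTop (nhds (-bs j))) →
        ¬ Tendsto (fun m : ℕ => Ψ θ i m) atTop (nhds (-bs i))}) ?_ fun y => ?_
  · refine MeasurableSet.imp ?_ (hmeas i).compl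
    rw [Set.ofPred_forall]
    exact .iInter fun j => MeasurableSet.imp (.const _) (hmeas j).compl
  · rw [ae_iff]
    refine Set.Countable.measure_zero ?_ _
    rcases Set.eq_empty_or_nonempty
      {x : ℝ | ¬ y + LinearMap.single ℝ (fun _ : Fin (n + 2) => ℝ) i x ∈
        {θ | (∀ j < i, ¬ Tendsto (fun m : ℕ => Ψ θ j m) atTop (nhds (-bs j))) →
          ¬ Tendsto (fun m : ℕ => Ψ θ i m) atTop (nhds (-bs i))}} with h | ⟨x₀, hx₀⟩
    · rw [h]; exact Set.countable_empty
    refine ((countable_dir_preimage (dir (y i + x₀))).preimage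
      (add_right_injective (y i))).mono fun x hx => ?_
    simp only [Set.mem_ofPred_eq, Classical.not_imp, not_not] at hx hx₀
    have := (hΨ _).initial_eq_of_tendsto_neg hroot horder hang hbs (hΨ _) (hΨn _) (hΨn _) i
      (fun j hj => by simp [hΨ0, hj.ne]) hx.1 hx.2 hx₀.2
    simpa [hΨ0] using this

end HeadingNetwork

/-- Main theorem: for a rooted out-branching graph (root = agent 0, each other agent i has a
nonempty in-neighbor set of agents with smaller index) with feasible desired angles toward a
common target p*, the closed loop ḃ₀ = P_{b₀} b₀*, ḃᵢ = P_{bᵢ} Σ_{j ∈ Nᵢ} R(αᵢⱼ) bⱼ drives,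
for a.e. vector of initial angles, every solution to bᵢ → bᵢ*; in particular
bᵢ - R(αᵢⱼ) bⱼ → 0 for every edge, so all headings point toward p*. -/
theorem stmt12 (n : ℕ)
    (p : Fin (n + 2) → EuclideanSpace ℝ (Fin 2)) (ps : EuclideanSpace ℝ (Fin 2))
    (hps : ∀ i, ps ≠ p i)
    (N : Fin (n + 2) → Finset (Fin (n + 2)))
    (hroot : ∀ i : Fin (n + 2), i ≠ 0 → (N i).Nonempty)
    (horder : ∀ i : Fin (n + 2), ∀ j ∈ N i, (j : ℕ) < (i : ℕ))
    (α : Fin (n + 2) → Fin (n + 2) → ℝ)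
    (bis : Fin (n + 2) → EuclideanSpace ℝ (Fin 2))
    (hbis : ∀ i, bis i = ‖ps - p i‖⁻¹ • (ps - p i))
    (hang : ∀ i : Fin (n + 2), i ≠ 0 → ∀ j ∈ N i, bis i = rot (α i j) (bis j)) :
    ∀ᵐ θ : Fin (n + 2) → ℝ ∂volume, ∀ b : Fin (n + 2) → ℝ → EuclideanSpace ℝ (Fin 2),
      (∀ t ≥ (0 : ℝ), HasDerivAt (b 0) (proj (b 0 t) (bis 0)) t) →
      (∀ i : Fin (n + 2), i ≠ 0 → ∀ t ≥ (0 : ℝ),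
        HasDerivAt (b i) (proj (b i t) (∑ j ∈ N i, rot (α i j) (b j t))) t) →
      (∀ i, b i 0 = dir (θ i)) →
      (∀ i, Filter.Tendsto (b i) Filter.atTop (nhds (bis i)))
      ∧ ∀ i : Fin (n + 2), i ≠ 0 → ∀ j ∈ N i,
          Filter.Tendsto (fun t => b i t - rot (α i j) (b j t)) Filter.atTop (nhds 0) := by
  have horder' : ∀ i, ∀ j ∈ N i, j < i := fun i j hj => Fin.lt_def.2 (horder i j hj)
  have hunit : ∀ i, ‖bis i‖ = 1 := fun i => by
    rw [hbis, norm_smul, norm_inv, norm_norm,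
      inv_mul_cancel₀ (norm_ne_zero_iff.2 (sub_ne_zero.2 (hps i)))]
  obtain ⟨Ψ, hΨ, hΨ0, hΨc⟩ := exists_heading_flow (N := N) (α := α) (hunit 0)
  filter_upwards [ae_all_iff.2
    (ae_not_tendsto_neg hroot horder' hang hunit hΨ hΨ0 hΨc)] with θ hθ b hb0 hb hinit
  have hgood : ∀ i, ¬ Tendsto (fun m : ℕ => Ψ θ i m) atTop (nhds (-bis i)) := fun i => by
    induction i using WellFoundedLT.induction with
    | _ i ih => exact hθ i ih
  have hsol : IsHeadingSolution N α (bis 0) b := fun i t ht => by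
    unfold headingInput
    split_ifs with hi
    · rw [hi]; exact hb0 t ht
    · exact hb i hi t ht
  have heq : ∀ i, ∀ t ≥ 0, Ψ θ i t = b i t := fun i =>
    (hΨ θ).eq_of_initial horder' hsol (fun i => by rw [hΨ0, norm_dir]) i
      fun j _ => by rw [hΨ0, hinit]
  have hlim : ∀ i, Tendsto (b i) atTop (nhds (bis i)) := fun i =>
    ((hΨ θ).tendsto hroot horder' hang hunit (fun i => by rw [hΨ0, norm_dir]) i
      fun k _ => hgood k).congr' ((eventually_ge_atTop 0).mono (heq i))
  refine ⟨hlim, fun i hi j hj => ?_⟩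
  have := (hlim i).sub (((continuous_rot (α i j)).tendsto _).comp (hlim j))
  rwa [← hang i hi j hj, sub_self] at this
end

section
/- Let p₁, p₂, p* ∈ ℝ² with p* ≠ p₁ and p* ≠ p₂, and set b₁* := (p* − p₁)/‖p* − p₁‖ and b₂* := (p* − p₂)/‖p* − p₂‖. If b₁* ≠ b₂* and b₁* ≠ −b₂*, then p* = (P_{b₁*} + P_{b₂*})⁻¹ (P_{b₁*} p₁ + P_{b₂*} p₂), where P_b := I₂ − b bᵀ. That is, the common target point is uniquely recovered from the two positions and their target headings. -/
open scoped RealInnerProductSpace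
open Real Matrix

/-- The projection matrix `P_b = I₂ - b bᵀ` associated with a vector b ∈ ℝ². -/
noncomputable def projM (b : EuclideanSpace ℝ (Fin 2)) : Matrix (Fin 2) (Fin 2) ℝ :=
  1 - Matrix.vecMulVec (fun i => b i) (fun i => b i)

/-- The coordinates of a unit vector in the plane have squares summing to one. -/
theorem sq_add_sq_eq_one_of_norm_eq_one {b : EuclideanSpace ℝ (Fin 2)} (hb : ‖b‖ = 1) :
    b 0 ^ 2 + b 1 ^ 2 = 1 := by
  simpa [hb] using (EuclideanSpace.real_norm_sq_eq b).symm

/-- A unit vector `b` lies in the kernel of `P_b`. -/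
theorem projM_mulVec_self {b : EuclideanSpace ℝ (Fin 2)} (hb : ‖b‖ = 1) :
    projM b *ᵥ (fun i => b i) = 0 := by
  have hsq : b 0 ^ 2 + b 1 ^ 2 = 1 := sq_add_sq_eq_one_of_norm_eq_one hb
  ext i
  fin_cases i <;> simp [projM, Matrix.mulVec, dotProduct, Fin.sum_univ_two, vecMulVec_apply]
  · linear_combination -b 0 * hsq
  · linear_combination -b 1 * hsq

/-- The projection along the heading from `p` to `q` does not distinguish `p` from `q`. -/
theorem projM_heading_mulVec_eq {p q : EuclideanSpace ℝ (Fin 2)} (h : q ≠ p) :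
    projM (‖q - p‖⁻¹ • (q - p)) *ᵥ (fun i => p i) =
      projM (‖q - p‖⁻¹ • (q - p)) *ᵥ (fun i => q i) := by
  have hnorm : ‖q - p‖ ≠ 0 := norm_ne_zero_iff.mpr (sub_ne_zero.mpr h)
  have hker := projM_mulVec_self (norm_smul_inv_norm (𝕜 := ℝ) (sub_ne_zero.mpr h))
  simp only [RCLike.ofReal_real_eq_id, id_eq] at hker
  have hq : (fun i => q i) =
      (fun i => p i) + ‖q - p‖ • (fun i => (‖q - p‖⁻¹ • (q - p)) i) := by
    ext i
    simp [hnorm]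
  rw [hq, mulVec_add, mulVec_smul, hker, smul_zero, add_zero]

/-- For unit vectors, `det (P_b + P_c)` is the square of the cross product of `b` and `c`. -/
theorem det_projM_add_projM {b c : EuclideanSpace ℝ (Fin 2)} (hb : ‖b‖ = 1) (hc : ‖c‖ = 1) :
    (projM b + projM c).det = (b 0 * c 1 - b 1 * c 0) ^ 2 := by
  have hb2 : b 0 ^ 2 + b 1 ^ 2 = 1 := sq_add_sq_eq_one_of_norm_eq_one hb
  have hc2 : c 0 ^ 2 + c 1 ^ 2 = 1 := sq_add_sq_eq_one_of_norm_eq_one hc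
  simp [projM, det_fin_two, vecMulVec_apply]
  linear_combination -2 * hb2 - 2 * hc2

/-- Unit vectors in the plane with vanishing cross product are equal or opposite. -/
theorem eq_or_eq_neg_of_cross_eq_zero {b c : EuclideanSpace ℝ (Fin 2)} (hb : ‖b‖ = 1)
    (hc : ‖c‖ = 1) (h : b 0 * c 1 - b 1 * c 0 = 0) : b = c ∨ b = -c := by
  have hb2 : b 0 ^ 2 + b 1 ^ 2 = 1 := sq_add_sq_eq_one_of_norm_eq_one hb
  have hc2 : c 0 ^ 2 + c 1 ^ 2 = 1 := sq_add_sq_eq_one_of_norm_eq_one hc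
  have hdot : (b 0 * c 0 + b 1 * c 1) ^ 2 = 1 := by
    linear_combination (c 0 ^ 2 + c 1 ^ 2) * hb2 + hc2 - (b 0 * c 1 - b 1 * c 0) * h
  have h0 : b 0 = (b 0 * c 0 + b 1 * c 1) * c 0 := by
    linear_combination c 1 * h - b 0 * hc2
  have h1 : b 1 = (b 0 * c 0 + b 1 * c 1) * c 1 := by
    linear_combination -c 0 * h - b 1 * hc2
  rcases sq_eq_one_iff.mp hdot with hd | hd <;>
    simp only [hd, one_mul, neg_one_mul] at h0 h1
  · left
    ext i
    fin_cases i <;> simp [h0, h1]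
  · right
    ext i
    fin_cases i <;> simp [h0, h1]

/-- The common target point is recovered from two positions and their target headings:
if b₁* = (p*-p₁)/‖p*-p₁‖, b₂* = (p*-p₂)/‖p*-p₂‖ and b₁* ≠ ±b₂*, then
p* = (P_{b₁*} + P_{b₂*})⁻¹ (P_{b₁*} p₁ + P_{b₂*} p₂). -/
theorem stmt14 (p1 p2 ps : EuclideanSpace ℝ (Fin 2)) (h1 : ps ≠ p1) (h2 : ps ≠ p2)
    (b1s b2s : EuclideanSpace ℝ (Fin 2))
    (hb1 : b1s = ‖ps - p1‖⁻¹ • (ps - p1)) (hb2 : b2s = ‖ps - p2‖⁻¹ • (ps - p2))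
    (hne : b1s ≠ b2s) (hne' : b1s ≠ -b2s) :
    (fun i => ps i) =
      (projM b1s + projM b2s)⁻¹ *ᵥ
        (projM b1s *ᵥ (fun i => p1 i) + projM b2s *ᵥ (fun i => p2 i)) := by
  have hn1 : ‖b1s‖ = 1 := by
    simpa [hb1] using norm_smul_inv_norm (𝕜 := ℝ) (sub_ne_zero.mpr h1)
  have hn2 : ‖b2s‖ = 1 := by
    simpa [hb2] using norm_smul_inv_norm (𝕜 := ℝ) (sub_ne_zero.mpr h2)
  have hdet : IsUnit (projM b1s + projM b2s).det := by
    rw [det_projM_add_projM hn1 hn2, isUnit_iff_ne_zero]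
    exact pow_ne_zero 2 fun h =>
      (eq_or_eq_neg_of_cross_eq_zero hn1 hn2 h).elim hne hne'
  have hp1 : projM b1s *ᵥ (fun i => p1 i) = projM b1s *ᵥ (fun i => ps i) :=
    hb1 ▸ projM_heading_mulVec_eq h1
  have hp2 : projM b2s *ᵥ (fun i => p2 i) = projM b2s *ᵥ (fun i => ps i) :=
    hb2 ▸ projM_heading_mulVec_eq h2
  rw [hp1, hp2, ← add_mulVec, mulVec_mulVec, nonsing_inv_mul _ hdet, one_mulVec]
end
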